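/- Let k be a field, B = k[x,y,z,w], S = k[xz, yz, xw, yw] ⊆ B, I := xS + yS and J := zS + wS. Then the set A' of all 2×2 matrices over B with entry pattern [[S, I],[J, S]] (i.e., diagonal entries in S, (1,2) entry in I, (2,1) entry in J) is a unital k-subalgebra of M₂(B), and the k-algebra homomorphism A' → End_S(S ⊕ J) sending a matrix to its action on column vectors (with first entry in S and second entry in J) is an isomorphism; in particular A' ≅ End_S(S ⊕ J). -/

import Mathlib

open MvPolynomial

set_option synthInstance.maxHeartbeats 1000000
set_option maxHeartbeats 1000000

noncomputable section

/-- `S = k[xz, yz, xw, yw] ⊆ B = k[x,y,z,w]`, where `x = X 0`, `y = X 1`, `z = X 2`,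
`w = X 3`. -/
def quadS (k : Type*) [Field k] : Subalgebra k (MvPolynomial (Fin 4) k) :=
  Algebra.adjoin k ({X 0 * X 2, X 1 * X 2, X 0 * X 3, X 1 * X 3} : Set (MvPolynomial (Fin 4) k))

/-- `I = xS + yS` as an `S`-submodule of `B`. -/
def Imod (k : Type*) [Field k] : Submodule ↥(quadS k) (MvPolynomial (Fin 4) k) :=
  Submodule.span ↥(quadS k) ({X 0, X 1} : Set (MvPolynomial (Fin 4) k))

/-- `J = zS + wS` as an `S`-submodule of `B`. -/
def Jmod (k : Type*) [Field k] : Submodule ↥(quadS k) (MvPolynomial (Fin 4) k) :=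
  Submodule.span ↥(quadS k) ({X 2, X 3} : Set (MvPolynomial (Fin 4) k))

/-- The set of `2 × 2` matrices over `B` with entry pattern `[[S, I], [J, S]]`. -/
def A2set (k : Type*) [Field k] : Set (Matrix (Fin 2) (Fin 2) (MvPolynomial (Fin 4) k)) :=
  {M | M 0 0 ∈ quadS k ∧ M 0 1 ∈ Imod k ∧ M 1 0 ∈ Jmod k ∧ M 1 1 ∈ quadS k}

/-- The set of column vectors with first entry in `S` and second entry in `J`,
realizing `S ⊕ J` inside `B²`. -/
def SJset (k : Type*) [Field k] : Set (Fin 2 → MvPolynomial (Fin 4) k) :=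
  {v | v 0 ∈ quadS k ∧ v 1 ∈ Jmod k}

/-!
An endomorphism of a direct sum of submodules `N j` of an algebra `A` is a matrix of linear maps
`N j → N i`. If every linear map `N j → A` is multiplication by a unique element of `A`, it is
therefore a matrix with `(i, j)` entry in the colon module `N i / N j`. For `S` and `J` this
hypothesis holds because `x J ⊆ S`, which forces `z * f w = w * f z` for linear `f : J → B`, and
because `z`, `w` have no common factor. Grading `B` by `deg x = deg y = 1`, `deg z = deg w = -1`
makes `S`, `I`, `J` the components of degree `0`, `1`, `-1`, so that `1 / J = I` and `J / J = S`
become statements about degrees.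
-/

open scoped Pointwise

section PiInclusion

variable {R ι : Type*} {φ : ι → Type*} [Semiring R] [∀ j, AddCommMonoid (φ j)]
  [∀ j, Module R (φ j)] [DecidableEq ι]

/-- The inclusion of the `j`-th summand `N j` into the product of the submodules `N j`, which is
their direct sum when `ι` is finite. -/
def piInclusion (N : ∀ j, Submodule R (φ j)) (j : ι) : N j →ₗ[R] Submodule.pi Set.univ N :=
  (LinearMap.single R φ j).restrict fun _ hn => Submodule.le_comap_single_pi N hn

theorem coe_piInclusion {N : ∀ j, Submodule R (φ j)} (j : ι) (n : N j) :
    (piInclusion N j n : ∀ j, φ j) = Pi.single j (n : φ j) :=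
  rfl

theorem sum_piInclusion [Fintype ι] {N : ∀ j, Submodule R (φ j)} (v : Submodule.pi Set.univ N) :
    ∑ j, piInclusion N j ⟨v.1 j, v.2 j trivial⟩ = v := by
  refine Subtype.ext ?_
  rw [Submodule.coe_sum]
  exact Finset.univ_sum_single v.1

theorem linearMap_ext_piInclusion [Finite ι] {M : Type*} [AddCommMonoid M] [Module R M]
    {N : ∀ j, Submodule R (φ j)} {f g : Submodule.pi Set.univ N →ₗ[R] M}
    (h : ∀ j, f ∘ₗ piInclusion N j = g ∘ₗ piInclusion N j) : f = g := by
  cases nonempty_fintype ι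
  ext v
  rw [← sum_piInclusion v, map_sum, map_sum]
  exact Finset.sum_congr rfl fun j _ => LinearMap.congr_fun (h j) _

end PiInclusion

section ColonMatrix

variable {R A : Type*} [CommSemiring R] [CommSemiring A] [Algebra R A]

/-- The map `A → Hom_R(N, A)` sending `a` to the multiplication `n ↦ a * n`. Its bijectivity
identifies `Hom_R(N, N')` with the colon module `N' / N` for every submodule `N'` of `A`. -/
def mulRestrict (N : Submodule R A) : A →ₗ[R] N →ₗ[R] A :=
  (LinearMap.mul R A).compl₂ N.subtype

@[simp]
theorem mulRestrict_apply (N : Submodule R A) (a : A) (n : N) : mulRestrict N a n = a * n :=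
  rfl

theorem mul_map_comm {N : Submodule R A} {p : A} (hp : IsRegular p) (hpN : p ∈ 1 / N)
    (f : N →ₗ[R] A) (u v : N) : (u : A) * f v = v * f u := by
  have smul_eq (n : N) : ∃ r : R, ∀ a : A, r • a = p * n * a := by
    obtain ⟨r, hr⟩ := Submodule.mem_one.mp (Submodule.mem_div_iff_forall_mul_mem.mp hpN n n.2)
    exact ⟨r, fun a => by rw [Algebra.smul_def, hr]⟩
  obtain ⟨r, hr⟩ := smul_eq u
  obtain ⟨s, hs⟩ := smul_eq v
  have smul_comm : r • v = s • u := Subtype.ext <| by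
    simp only [Submodule.coe_smul, hr, hs]
    ring
  refine hp.left ?_
  calc p * (u * f v) = f (r • v) := by rw [map_smul, hr, mul_assoc]
    _ = f (s • u) := by rw [smul_comm]
    _ = p * (v * f u) := by rw [map_smul, hs, mul_assoc]

theorem mulRestrict_bijective {N : Submodule R A} {p u v : A} (hp : IsRegular p)
    (hpN : p ∈ 1 / N) (hu : u ∈ N) (hv : v ∈ N) (hu_reg : IsRegular u)
    (huv : ∀ a, u ∣ v * a → u ∣ a) : Function.Bijective (mulRestrict N) := by
  refine ⟨fun a b hab => hu_reg.right (LinearMap.congr_fun hab ⟨u, hu⟩), fun f => ?_⟩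
  obtain ⟨q, hq⟩ : u ∣ f ⟨u, hu⟩ :=
    huv _ ⟨_, mul_map_comm hp hpN f ⟨v, hv⟩ ⟨u, hu⟩⟩
  refine ⟨q, LinearMap.ext fun n => hu_reg.left ?_⟩
  calc u * (q * n) = n * f ⟨u, hu⟩ := by rw [hq]; ring
    _ = u * f n := mul_map_comm hp hpN f n ⟨u, hu⟩

theorem mulRestrict_one_bijective : Function.Bijective (mulRestrict (1 : Submodule R A)) := by
  have one_mem : (1 : A) ∈ (1 : Submodule R A) := Submodule.one_le.mp le_rfl
  exact mulRestrict_bijective isRegular_one (Submodule.one_mem_div.mpr le_rfl) one_mem one_mem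
    isRegular_one fun a h => by rwa [one_mul] at h

theorem submodule_div_one (N : Submodule R A) : N / 1 = N := by
  refine le_antisymm (fun a ha => ?_) (Submodule.le_div_iff_mul_le.mpr (mul_one N).le)
  rw [← mul_one a]
  exact Submodule.mem_div_iff_forall_mul_mem.mp ha 1 (Submodule.one_le.mp le_rfl)

variable {ι : Type*} [Fintype ι] [DecidableEq ι]

/-- The algebra of square matrices over `A` whose `(i, j)` entry multiplies `N j` into `N i`. -/
def colonMatrix (N : ι → Submodule R A) : Subalgebra R (Matrix ι ι A) where
  carrier := {M | ∀ i j, M i j ∈ N i / N j}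
  mul_mem' {M M'} hM hM' i j := by
    refine Submodule.sum_mem _ fun l _ => Submodule.mem_div_iff_forall_mul_mem.mpr fun n hn => ?_
    rw [mul_assoc]
    exact hM i l _ (hM' l j n hn)
  add_mem' hM hM' i j := add_mem (hM i j) (hM' i j)
  algebraMap_mem' r i j := by
    rw [Matrix.algebraMap_matrix_apply]
    split_ifs with h
    · subst h
      exact Submodule.le_div_iff_mul_le.mpr (one_mul (N i)).le (Submodule.algebraMap_mem r)
    · exact zero_mem _

theorem mem_colonMatrix {N : ι → Submodule R A} {M : Matrix ι ι A} :
    M ∈ colonMatrix N ↔ ∀ i j, M i j ∈ N i / N j :=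
  Iff.rfl

theorem mulVec_mem_pi {N : ι → Submodule R A} {M : Matrix ι ι A} (hM : M ∈ colonMatrix N)
    {v : ι → A} (hv : v ∈ Submodule.pi Set.univ N) : M.mulVec v ∈ Submodule.pi Set.univ N :=
  fun i _ => Submodule.sum_mem _ fun j _ => hM i j _ (hv j trivial)

/-- The action of `colonMatrix N` on the column vectors with `j`-th entry in `N j`, which realize
the direct sum of the `N j` inside `ι → A`. -/
def colonMatrixAction (N : ι → Submodule R A) :
    colonMatrix N →ₐ[R] Module.End R (Submodule.pi Set.univ N) where
  toFun M := (M.1.mulVecLin.restrictScalars R).restrict fun _ => mulVec_mem_pi M.2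
  map_one' := LinearMap.ext fun v => Subtype.ext (Matrix.one_mulVec v.1)
  map_mul' M M' := LinearMap.ext fun v => Subtype.ext (Matrix.mulVec_mulVec v.1 M.1 M'.1).symm
  map_zero' := LinearMap.ext fun v => Subtype.ext (Matrix.zero_mulVec v.1)
  map_add' M M' := LinearMap.ext fun v => Subtype.ext (Matrix.add_mulVec M.1 M'.1 v.1)
  commutes' r := LinearMap.ext fun v => Subtype.ext <| by
    change (algebraMap R (Matrix ι ι A) r).mulVec v.1 = r • v.1
    rw [Algebra.algebraMap_eq_smul_one, Matrix.smul_mulVec, Matrix.one_mulVec]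

theorem coe_colonMatrixAction_apply {N : ι → Submodule R A} (M : colonMatrix N)
    (v : Submodule.pi Set.univ N) : (colonMatrixAction N M v : ι → A) = M.1.mulVec v :=
  rfl

theorem coe_colonMatrixAction_piInclusion {N : ι → Submodule R A} (M : colonMatrix N) (i j : ι)
    (n : N j) : (colonMatrixAction N M (piInclusion N j n) : ι → A) i = M.1 i j * n := by
  rw [coe_colonMatrixAction_apply, coe_piInclusion]
  simp

theorem colonMatrixAction_bijective {N : ι → Submodule R A}
    (hN : ∀ j, Function.Bijective (mulRestrict (N j))) :
    Function.Bijective (colonMatrixAction N) := by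
  constructor
  · refine fun M M' h => Subtype.ext (Matrix.ext fun i j => (hN j).1 (LinearMap.ext fun n => ?_))
    simp only [mulRestrict_apply, ← coe_colonMatrixAction_piInclusion, h]
  · intro f
    let entry (i j : ι) : N j →ₗ[R] A :=
      LinearMap.proj i ∘ₗ Submodule.subtype _ ∘ₗ f ∘ₗ piInclusion N j
    choose M hM using fun i j => (hN j).2 (entry i j)
    have hM_apply (i j : ι) (n : N j) : M i j * n = (f (piInclusion N j n)).1 i :=
      LinearMap.congr_fun (hM i j) n
    have hM_mem : Matrix.of M ∈ colonMatrix N := fun i j n hn => by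
      rw [Matrix.of_apply, hM_apply i j ⟨n, hn⟩]
      exact (f _).2 i trivial
    refine ⟨⟨Matrix.of M, hM_mem⟩, linearMap_ext_piInclusion fun j => LinearMap.ext fun n =>
      Subtype.ext (funext fun i => ?_)⟩
    rw [LinearMap.comp_apply, coe_colonMatrixAction_piInclusion]
    exact hM_apply i j n

theorem mem_colonMatrix_one_cons {J : Submodule R A} {M : Matrix (Fin 2) (Fin 2) A} :
    M ∈ colonMatrix ![1, J] ↔
      M 0 0 ∈ (1 : Submodule R A) ∧ M 0 1 ∈ 1 / J ∧ M 1 0 ∈ J ∧ M 1 1 ∈ J / J := by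
  simp [mem_colonMatrix, Fin.forall_fin_two, submodule_div_one, and_assoc]

end ColonMatrix

section Weights

variable {k σ : Type*} [CommSemiring k]

theorem X_dvd_of_X_dvd_X_mul {i j : σ} (hij : i ≠ j) {q : MvPolynomial σ k}
    (h : X i ∣ X j * q) : X i ∣ q := by
  rw [X_dvd_iff_modMonomial_eq_zero] at h ⊢
  ext d
  by_cases hd : Finsupp.single i 1 ≤ d
  · rw [coeff_modMonomial_of_le _ hd, coeff_zero]
  · have hd' : ¬ Finsupp.single i 1 ≤ Finsupp.single j 1 + d := by
      simpa [Finsupp.single_le_iff, Finsupp.single_eq_of_ne hij] using hd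
    rw [coeff_modMonomial_of_not_le _ hd, ← coeff_X_mul d j, ← coeff_modMonomial_of_not_le _ hd', h,
      coeff_zero, coeff_zero]

section Colon

variable {G : Type*} [AddCancelCommMonoid G] {w : σ → G}

theorem isWeightedHomogeneous_of_mul_X {q : MvPolynomial σ k} {i : σ} {g : G}
    (h : IsWeightedHomogeneous w (q * X i) (g + w i)) : IsWeightedHomogeneous w q g := by
  intro d hd
  rw [← coeff_mul_X d i q] at hd
  have weight_eq := h hd
  rwa [map_add, Finsupp.weight_single, one_smul, add_left_inj] at weight_eq

variable {S : Subalgebra k (MvPolynomial σ k)} {L M N : Submodule S (MvPolynomial σ k)}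

theorem div_eq_of_restrictScalars_eq {g : G} {i : σ}
    (hL : L.restrictScalars k = weightedHomogeneousSubmodule k w (g + w i))
    (hM : M.restrictScalars k = weightedHomogeneousSubmodule k w (w i))
    (hN : N.restrictScalars k = weightedHomogeneousSubmodule k w g) : L / M = N := by
  have mem_L (p) : p ∈ L ↔ IsWeightedHomogeneous w p (g + w i) := SetLike.ext_iff.mp hL p
  have mem_M (p) : p ∈ M ↔ IsWeightedHomogeneous w p (w i) := SetLike.ext_iff.mp hM p
  have mem_N (p) : p ∈ N ↔ IsWeightedHomogeneous w p g := SetLike.ext_iff.mp hN p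
  ext p
  simp only [Submodule.mem_div_iff_forall_mul_mem, mem_L, mem_M, mem_N]
  exact ⟨fun h => isWeightedHomogeneous_of_mul_X (h _ (isWeightedHomogeneous_X k w i)),
    fun hp q hq => hp.mul hq⟩

end Colon

theorem weightedHomogeneousSubmodule_le {G : Type*} [AddCommMonoid G] {w : σ → G} {g : G}
    {N : Submodule k (MvPolynomial σ k)}
    (hN : ∀ d, Finsupp.weight w d = g → monomial d 1 ∈ N) :
    weightedHomogeneousSubmodule k w g ≤ N := by
  intro p hp
  rw [← support_sum_monomial_coeff p]
  refine Submodule.sum_mem _ fun d hd => ?_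
  rw [← mul_one (coeff d p), ← smul_eq_mul, ← smul_monomial]
  exact N.smul_mem _ (hN d (hp (mem_support_iff.mp hd)))

section UnitWeights

variable {w : σ → ℤ} {ε : ℤ}

/-- The variables of weight `ε`, as polynomials. -/
def varsOfWeight (k : Type*) [CommSemiring k] (w : σ → ℤ) (ε : ℤ) : Set (MvPolynomial σ k) :=
  X '' {i | w i = ε}

theorem exists_eq_single_add (hw : ∀ i, IsUnit (w i)) (hε : IsUnit ε) {d : σ →₀ ℕ}
    (hd : -(d.degree : ℤ) < ε * Finsupp.weight w d) :
    ∃ i e, w i = ε ∧ d = Finsupp.single i 1 + e := by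
  obtain ⟨i, hi, hwi⟩ : ∃ i ∈ d.support, w i = ε := by
    by_contra! h
    have hwε (i) (hi : i ∈ d.support) : ε * w i = -1 := by
      rw [(Int.isUnit_ne_iff_eq_neg (hw i) hε).mp (h i hi), mul_neg, Int.isUnit_mul_self hε]
    refine hd.ne' ?_
    rw [Finsupp.weight_apply, Finsupp.sum, Finset.mul_sum, Finsupp.degree_apply, Nat.cast_sum,
      ← Finset.sum_neg_distrib]
    refine Finset.sum_congr rfl fun i hi => ?_
    rw [nsmul_eq_mul, mul_left_comm, hwε i hi, mul_neg_one]
  have single_le : Finsupp.single i 1 ≤ d := by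
    rw [Finsupp.single_le_iff]
    exact Nat.one_le_iff_ne_zero.mpr (Finsupp.mem_support_iff.mp hi)
  exact ⟨i, d - Finsupp.single i 1, hwi, (add_tsub_cancel_of_le single_le).symm⟩

theorem exists_eq_single_add_of_weight_eq (hw : ∀ i, IsUnit (w i)) (hε : IsUnit ε) {d : σ →₀ ℕ}
    (hd : Finsupp.weight w d = ε) :
    ∃ i e, w i = ε ∧ Finsupp.weight w e = 0 ∧ d = Finsupp.single i 1 + e := by
  obtain ⟨i, e, hi, rfl⟩ := exists_eq_single_add hw hε (d := d) <| by
    rw [hd, Int.isUnit_mul_self hε]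
    omega
  rw [map_add, Finsupp.weight_single, one_smul, hi, add_eq_left] at hd
  exact ⟨i, e, hi, hd, rfl⟩

theorem monomial_mem_adjoin (hw : ∀ i, IsUnit (w i)) {d : σ →₀ ℕ} (hd : Finsupp.weight w d = 0) :
    monomial d (1 : k) ∈ Algebra.adjoin k (varsOfWeight k w 1 * varsOfWeight k w (-1)) := by
  induction hn : d.degree using Nat.strong_induction_on generalizing d with
  | _ n ih =>
    obtain rfl | hd0 := eq_or_ne d 0
    · exact one_mem _
    obtain ⟨i, d, hi, rfl⟩ := exists_eq_single_add hw isUnit_one (d := d) <| by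
      have := mt (Finsupp.degree_eq_zero_iff d).mp hd0
      omega
    rw [map_add, Finsupp.weight_single, one_smul, hi, add_comm, ← eq_neg_iff_add_eq_zero] at hd
    obtain ⟨j, d, hj, hd', rfl⟩ := exists_eq_single_add_of_weight_eq hw isUnit_one.neg hd
    simp only [monomial_single_add, pow_one, ← mul_assoc]
    refine mul_mem (Algebra.subset_adjoin (Set.mul_mem_mul ⟨i, hi, rfl⟩ ⟨j, hj, rfl⟩))
      (ih d.degree ?_ hd' rfl)
    rw [← hn, map_add, map_add, Finsupp.degree_single, Finsupp.degree_single]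
    omega

theorem adjoin_varsOfWeight_mul_toSubmodule (hw : ∀ i, IsUnit (w i)) :
    (Algebra.adjoin k (varsOfWeight k w 1 * varsOfWeight k w (-1))).toSubmodule =
      weightedHomogeneousSubmodule k w 0 := by
  refine le_antisymm (fun p hp => ?_) (weightedHomogeneousSubmodule_le fun d hd =>
    monomial_mem_adjoin hw hd)
  change IsWeightedHomogeneous w p 0
  induction hp using Algebra.adjoin_induction with
  | mem p hp =>
    obtain ⟨_, ⟨i, hi, rfl⟩, _, ⟨j, hj, rfl⟩, rfl⟩ := hp
    have := (isWeightedHomogeneous_X k w i).mul (isWeightedHomogeneous_X k w j)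
    rwa [hi, hj] at this
  | algebraMap r => exact isWeightedHomogeneous_C w r
  | add p q _ _ hp hq => exact hp.add hq
  | mul p q _ _ hp hq => simpa only [add_zero] using hp.mul hq

theorem span_varsOfWeight_restrictScalars (hw : ∀ i, IsUnit (w i)) (hε : IsUnit ε)
    {S : Subalgebra k (MvPolynomial σ k)}
    (hS : S.toSubmodule = weightedHomogeneousSubmodule k w 0) :
    (Submodule.span S (varsOfWeight k w ε)).restrictScalars k =
      weightedHomogeneousSubmodule k w ε := by
  have mem_S (p) : p ∈ S ↔ IsWeightedHomogeneous w p 0 := SetLike.ext_iff.mp hS p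
  refine le_antisymm (fun p hp => ?_) (weightedHomogeneousSubmodule_le fun d hd => ?_)
  · change IsWeightedHomogeneous w p ε
    induction hp using Submodule.span_induction with
    | mem p hp =>
      obtain ⟨i, rfl, rfl⟩ := hp
      exact isWeightedHomogeneous_X k w i
    | zero => exact isWeightedHomogeneous_zero k w ε
    | add p q _ _ hp hq => exact hp.add hq
    | smul s p _ hp => simpa only [zero_add] using! ((mem_S s).mp s.2).mul hp
  · obtain ⟨i, e, hi, he, rfl⟩ := exists_eq_single_add_of_weight_eq hw hε hd
    rw [monomial_single_add, pow_one, mul_comm]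
    exact Submodule.smul_mem _
      (⟨_, (mem_S _).mpr (isWeightedHomogeneous_monomial w e 1 he)⟩ : S)
      (Submodule.subset_span ⟨i, hi, rfl⟩)

end UnitWeights

end Weights

theorem A2_subalgebra_iso_End_general {k σ G : Type*} [CommSemiring k] [AddCommGroup G]
    {w : σ → G} {S : Subalgebra k (MvPolynomial σ k)} {I J : Submodule S (MvPolynomial σ k)}
    {i j : σ} (hij : i ≠ j) (hw : w i = w j)
    (hS : S.toSubmodule = weightedHomogeneousSubmodule k w 0)
    (hI : I.restrictScalars k = weightedHomogeneousSubmodule k w (-w i))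
    (hJ : J.restrictScalars k = weightedHomogeneousSubmodule k w (w i))
    {p : MvPolynomial σ k} (hp : IsRegular p) (hpI : p ∈ I) :
    (∃ 𝒜 : Subalgebra k (Matrix (Fin 2) (Fin 2) (MvPolynomial σ k)),
      (𝒜 : Set (Matrix (Fin 2) (Fin 2) (MvPolynomial σ k))) =
        {M | M 0 0 ∈ S ∧ M 0 1 ∈ I ∧ M 1 0 ∈ J ∧ M 1 1 ∈ S}) ∧
    ∀ 𝒜 : Subalgebra k (Matrix (Fin 2) (Fin 2) (MvPolynomial σ k)),
      (𝒜 : Set (Matrix (Fin 2) (Fin 2) (MvPolynomial σ k))) =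
        {M | M 0 0 ∈ S ∧ M 0 1 ∈ I ∧ M 1 0 ∈ J ∧ M 1 1 ∈ S} →
      ∀ P : Submodule S (Fin 2 → MvPolynomial σ k),
        (P : Set (Fin 2 → MvPolynomial σ k)) = {v | v 0 ∈ S ∧ v 1 ∈ J} →
        ∃ Φ : 𝒜 ≃ₐ[k] Module.End S P, ∀ (M : 𝒜) (v : P),
          (Φ M v : Fin 2 → MvPolynomial σ k) =
            (M : Matrix (Fin 2) (Fin 2) (MvPolynomial σ k)).mulVec v := by
  have restrictScalars_one : (1 : Submodule S (MvPolynomial σ k)).restrictScalars k =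
      weightedHomogeneousSubmodule k w 0 := (Subalgebra.restrictScalars_one _ _ S).trans hS
  have mem_one (b : MvPolynomial σ k) : b ∈ (1 : Submodule S (MvPolynomial σ k)) ↔ b ∈ S :=
    SetLike.ext_iff.mp (Subalgebra.restrictScalars_one _ _ S) b
  have one_div_J : 1 / J = I :=
    div_eq_of_restrictScalars_eq (by rwa [neg_add_cancel]) hJ hI
  have J_div_J : J / J = 1 :=
    div_eq_of_restrictScalars_eq (by rwa [zero_add]) hJ restrictScalars_one
  have X_mem_J {l : σ} (hl : w l = w i) : X l ∈ J :=
    (SetLike.ext_iff.mp hJ _).mpr (hl ▸ isWeightedHomogeneous_X k w l)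
  have mulRestrict_J_bijective : Function.Bijective (mulRestrict J) :=
    mulRestrict_bijective hp (one_div_J ▸ hpI) (X_mem_J rfl) (X_mem_J hw.symm) isRegular_X
      fun _ => X_dvd_of_X_dvd_X_mul hij
  have coe_colonMatrix :
      ((colonMatrix ![1, J]).restrictScalars k :
        Set (Matrix (Fin 2) (Fin 2) (MvPolynomial σ k))) =
      {M | M 0 0 ∈ S ∧ M 0 1 ∈ I ∧ M 1 0 ∈ J ∧ M 1 1 ∈ S} := Set.ext fun M =>
    mem_colonMatrix_one_cons.trans <| by
      simp only [one_div_J, J_div_J, mem_one, Set.mem_ofPred_eq]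
  have coe_pi : (Submodule.pi Set.univ ![1, J] : Set (Fin 2 → MvPolynomial σ k)) =
      {v | v 0 ∈ S ∧ v 1 ∈ J} := Set.ext fun v => by
    simp [Fin.forall_fin_two, mem_one]
  refine ⟨⟨_, coe_colonMatrix⟩, fun 𝒜 h𝒜 P hP => ?_⟩
  obtain rfl := SetLike.coe_injective (h𝒜.trans coe_colonMatrix.symm)
  obtain rfl := SetLike.coe_injective (hP.trans coe_pi.symm)
  have action_bijective := colonMatrixAction_bijective (N := ![1, J])
    (Fin.forall_fin_two.mpr ⟨mulRestrict_one_bijective, mulRestrict_J_bijective⟩)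
  exact ⟨AlgEquiv.ofBijective (Subalgebra.ofRestrictScalars k _ (colonMatrixAction ![1, J]))
    action_bijective, coe_colonMatrixAction_apply⟩

section FourVariables

/-- The grading `deg x = deg y = 1`, `deg z = deg w = -1` of `k[x, y, z, w]`, for which `S`, `I`
and `J` are the components of degree `0`, `1` and `-1`. -/
def quadWeight : Fin 4 → ℤ := ![1, 1, -1, -1]

theorem isUnit_quadWeight : ∀ i, IsUnit (quadWeight i) := by
  simp [Fin.forall_fin_succ, quadWeight]

variable (k : Type*) [Field k]

theorem varsOfWeight_quadWeight_one : varsOfWeight k quadWeight 1 = {X 0, X 1} := by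
  ext p
  simp [varsOfWeight, Fin.exists_fin_succ, quadWeight, eq_comm]

theorem varsOfWeight_quadWeight_neg_one : varsOfWeight k quadWeight (-1) = {X 2, X 3} := by
  ext p
  simp [varsOfWeight, Fin.exists_fin_succ, quadWeight, eq_comm]

theorem quadS_toSubmodule :
    (quadS k).toSubmodule = weightedHomogeneousSubmodule k quadWeight 0 := by
  rw [← adjoin_varsOfWeight_mul_toSubmodule isUnit_quadWeight, varsOfWeight_quadWeight_one,
    varsOfWeight_quadWeight_neg_one, quadS]
  congr 2
  ext p
  simp only [Set.mem_insert_iff, Set.mem_singleton_iff, Set.mem_mul, eq_comm,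
    exists_eq_or_imp, ↓existsAndEq, true_and]
  tauto

theorem Imod_restrictScalars :
    (Imod k).restrictScalars k = weightedHomogeneousSubmodule k quadWeight 1 := by
  rw [Imod, ← varsOfWeight_quadWeight_one]
  exact span_varsOfWeight_restrictScalars isUnit_quadWeight isUnit_one (quadS_toSubmodule k)

theorem Jmod_restrictScalars :
    (Jmod k).restrictScalars k = weightedHomogeneousSubmodule k quadWeight (-1) := by
  rw [Jmod, ← varsOfWeight_quadWeight_neg_one]
  exact span_varsOfWeight_restrictScalars isUnit_quadWeight isUnit_one.neg (quadS_toSubmodule k)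

end FourVariables

/-- the set `A'` of `2 × 2` matrices over `B` with entry pattern
`[[S, I], [J, S]]` is a unital `k`-subalgebra of `M₂(B)`, and the `k`-algebra
homomorphism `A' → End_S(S ⊕ J)` sending a matrix to its action on column vectors
(with first entry in `S` and second entry in `J`) is an isomorphism. -/
theorem A2_subalgebra_iso_End (k : Type*) [Field k] :
    (∃ 𝒜 : Subalgebra k (Matrix (Fin 2) (Fin 2) (MvPolynomial (Fin 4) k)),
      (𝒜 : Set (Matrix (Fin 2) (Fin 2) (MvPolynomial (Fin 4) k))) = A2set k) ∧
    ∀ (𝒜 : Subalgebra k (Matrix (Fin 2) (Fin 2) (MvPolynomial (Fin 4) k))),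
      (𝒜 : Set (Matrix (Fin 2) (Fin 2) (MvPolynomial (Fin 4) k))) = A2set k →
      ∀ (P : Submodule ↥(quadS k) (Fin 2 → MvPolynomial (Fin 4) k)),
        (P : Set (Fin 2 → MvPolynomial (Fin 4) k)) = SJset k →
        ∃ Φ : ↥𝒜 ≃ₐ[k] Module.End ↥(quadS k) ↥P,
          ∀ (M : ↥𝒜) (v : ↥P),
            ((Φ M v : Fin 2 → MvPolynomial (Fin 4) k))
              = (M : Matrix (Fin 2) (Fin 2) (MvPolynomial (Fin 4) k)).mulVec ↑v :=
  A2_subalgebra_iso_End_general (i := 2) (j := 3) (w := quadWeight) (by decide) rfl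
    (quadS_toSubmodule k) (Imod_restrictScalars k) (Jmod_restrictScalars k)
    isRegular_X (Submodule.subset_span (Set.mem_insert (X 0) {X 1}))
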